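/- Let d ≥ 2 and T ≥ 1. Let σ₁, …, σ_T be i.i.d. uniformly random transpositions in S_d and ξ₁, …, ξ_T i.i.d. Bernoulli(1/2) independent of everything, and for fixed σ = (σ₁,…,σ_T) let μ_σ be the law (over the ξ_i) of P_σ = σ₁^{ξ₁} ⋯ σ_T^{ξ_T}. For each irreducible complex representation ρ of S_d, let d_ρ be its dimension and r_ρ = χ_ρ/d_ρ, where χ_ρ is the character of ρ evaluated at any transposition. Then E_σ[ TV(μ_σ, Unif_{S_d}) ] ≤ ( Σ_ρ d_ρ² ((1 + r_ρ)/2)^T )^{1/2}, where the sum runs over a complete set of pairwise non-isomorphic nontrivial irreducible complex representations of S_d, TV(μ,ν) = Σ_x |μ(x) − ν(x)|, and Unif_{S_d} is the uniform distribution on S_d. -/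

import Mathlib

noncomputable section

open scoped Classical

namespace KacJL

/-- The product `σ₁^{ξ₁} ⋯ σ_T^{ξ_T}`. -/
def permProd {d T : ℕ} (σ : Fin T → Equiv.Perm (Fin d)) (ξ : Fin T → Bool) :
    Equiv.Perm (Fin d) :=
  (List.ofFn fun t => if ξ t then σ t else 1).prod

/-- For a fixed sequence `σ` of permutations, the probability that
`σ₁^{ξ₁} ⋯ σ_T^{ξ_T} = τ` over i.i.d. Bernoulli(1/2) exponents `ξ`. -/
def permProdPMF {d T : ℕ} (σ : Fin T → Equiv.Perm (Fin d)) (τ : Equiv.Perm (Fin d)) : ℝ :=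
  ((Finset.univ.filter fun ξ : Fin T → Bool => permProd σ ξ = τ).card : ℝ) / 2 ^ T

/-- The total variation distance (in the normalization `TV(μ,ν) = ∑ x |μ(x) - ν(x)|`)
between the law of `σ₁^{ξ₁} ⋯ σ_T^{ξ_T}` and the uniform distribution on `S_d`. -/
def tvToUniform {d T : ℕ} (σ : Fin T → Equiv.Perm (Fin d)) : ℝ :=
  ∑ τ : Equiv.Perm (Fin d), |permProdPMF σ τ - ((d.factorial : ℝ))⁻¹|

/-- The expectation over i.i.d. uniformly random transpositions `σ₁, …, σ_T` of the total
variation distance `TV(μ_σ, Unif_{S_d})`. -/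
def avgTV (d T : ℕ) : ℝ :=
  (∑ σ : Fin T → {τ : Equiv.Perm (Fin d) // τ.IsSwap},
      tvToUniform fun t => (σ t : Equiv.Perm (Fin d))) /
    (Fintype.card {τ : Equiv.Perm (Fin d) // τ.IsSwap}) ^ T

/-!
For a fixed sequence `σ`, Cauchy–Schwarz bounds the squared total variation distance by
`|G| ∑ g, μ_σ(g)² - 1`, and `∑ g, μ_σ(g)²` is the coefficient of `1` in the group algebra product
of the laws of `P_σ⁻¹` and `P_σ`. In that product the two innermost factors average to
`E[s^{-ζ} s^ξ] = w`, where `w` is the law of `s^ξ`: indeed `(1 + s⁻¹)(1 + s) / 4` equals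
`((1 + s⁻¹) / 2 + (1 + s) / 2) / 2`. Since `w` is central, averaging over `σ` telescopes to `w ^ T`.
By Wedderburn's theorem `|G|` times the coefficient of `1` in `w ^ T` is `∑ ρ, d_ρ tr ρ(w ^ T)`, and
by Schur's lemma `ρ(w)` is the scalar `(1 + r_ρ) / 2`; the trivial representation contributes `1`.
-/

open Finset
open LinearMap (mulLeft)
open scoped MonoidAlgebra BigOperators

section RegularTrace

variable {k : Type*} [CommRing k]

theorem trace_mulLeft_algEquiv {A B : Type*} [Ring A] [Algebra k A] [Ring B] [Algebra k B]
    (e : A ≃ₐ[k] B) (a : A) :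
    LinearMap.trace k B (mulLeft k (e a)) = LinearMap.trace k A (mulLeft k a) := by
  rw [← LinearMap.trace_conj' (mulLeft k a) e.toLinearEquiv]
  congr 1
  ext x
  simp [LinearEquiv.conj_apply]

theorem trace_mulLeft_pi {ι : Type*} [Fintype ι] {A : ι → Type*} [∀ i, Ring (A i)]
    [∀ i, Algebra k (A i)] [∀ i, Module.Free k (A i)] [∀ i, Module.Finite k (A i)]
    (a : ∀ i, A i) :
    LinearMap.trace k (∀ i, A i) (mulLeft k a) =
      ∑ i, LinearMap.trace k (A i) (mulLeft k (a i)) := by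
  let b i := Module.Free.chooseBasis k (A i)
  simp only [LinearMap.trace_eq_matrix_trace k (Pi.basis b),
    LinearMap.trace_eq_matrix_trace k (b _), Matrix.trace, Fintype.sum_sigma, Matrix.diag_apply,
    LinearMap.toMatrix_apply, LinearMap.mulLeft_apply, Pi.basis_repr, Pi.basis_apply, Pi.mul_apply,
    Pi.single_eq_same]

theorem trace_mulLeft_matrix {n : Type*} [Fintype n] (M : Matrix n n k) :
    LinearMap.trace k (Matrix n n k) (mulLeft k M) = Fintype.card n * M.trace := by
  have hrepr (N : Matrix n n k) (i j : n) : (Matrix.stdBasis k n n).repr N (i, j) = N i j := by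
    simp [Matrix.stdBasis]
  simp only [LinearMap.trace_eq_matrix_trace k (Matrix.stdBasis k n n), Matrix.trace,
    Fintype.sum_prod_type_right, Matrix.diag_apply, LinearMap.toMatrix_apply,
    LinearMap.mulLeft_apply, hrepr, Matrix.stdBasis_eq_single, Matrix.mul_single_apply_same,
    mul_one, sum_const, card_univ, nsmul_eq_mul]

theorem trace_mulLeft_monoidAlgebra {G : Type*} [Group G] [Fintype G] (a : k[G]) :
    LinearMap.trace k k[G] (mulLeft k a) = Fintype.card G * a.coeff 1 := by
  let b := MonoidAlgebra.basis G k
  have hdiag (g : G) : LinearMap.toMatrix b b (mulLeft k a) g g = a.coeff 1 := by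
    simp only [b, LinearMap.toMatrix_apply, LinearMap.mulLeft_apply, MonoidAlgebra.basis_apply]
    simp [MonoidAlgebra.basis]
  simp only [LinearMap.trace_eq_matrix_trace k b, Matrix.trace, Matrix.diag_apply, hdiag,
    sum_const, card_univ, nsmul_eq_mul]

end RegularTrace

section Irreducible

variable {k G V W : Type*} [Field k] [Monoid G] [AddCommGroup V] [Module k V] [AddCommGroup W]
  [Module k W] {ρ : Representation k G V} {ψ : Representation k G W}

theorem isIrreducible_iff :
    ρ.IsIrreducible ↔ Nontrivial V ∧
      ∀ U : Submodule k V, (∀ g, ∀ v ∈ U, ρ g v ∈ U) → U = ⊥ ∨ U = ⊤ := by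
  constructor
  · intro hρ
    refine ⟨?_, fun U hU => ?_⟩
    · by_contra hV
      have := not_nontrivial_iff_subsingleton.1 hV
      exact bot_ne_top (α := Subrepresentation ρ)
        (Subrepresentation.toSubmodule_injective (Subsingleton.elim _ _))
    · exact (eq_bot_or_eq_top (⟨U, fun g v => hU g v⟩ : Subrepresentation ρ)).imp
        (congrArg Subrepresentation.toSubmodule) (congrArg Subrepresentation.toSubmodule)
  · rintro ⟨_, h⟩
    exact
      { exists_pair_ne := ⟨⊥, ⊤, fun hbt => bot_ne_top (α := Submodule k V)
          (congrArg Subrepresentation.toSubmodule hbt)⟩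
        eq_bot_or_eq_top := fun U =>
          (h U.toSubmodule fun g _ hv => U.apply_mem_toSubmodule g hv).imp
            (fun hU => Subrepresentation.toSubmodule_injective hU)
            (fun hU => Subrepresentation.toSubmodule_injective hU) }

theorem isIrreducible_of_asAlgebraHom_surjective [Nontrivial V]
    (h : Function.Surjective ρ.asAlgebraHom) : ρ.IsIrreducible := by
  refine isIrreducible_iff.2 ⟨inferInstance, fun U hU => or_iff_not_imp_left.2 fun hbot => ?_⟩
  obtain ⟨v, hvU, hv⟩ := U.exists_mem_ne_zero_of_ne_bot hbot
  refine eq_top_iff.2 fun w _ => ?_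
  obtain ⟨f, rfl⟩ := IsSimpleModule.toSpanSingleton_surjective (Module.End k V) hv w
  obtain ⟨a, rfl⟩ := h f
  exact ρ.asAlgebraHom_mem_of_forall_mem U hU v hvU a

theorem conj_asAlgebraHom (φ : ρ.Equiv ψ) (a : k[G]) :
    φ.toLinearEquiv.conj (ρ.asAlgebraHom a) = ψ.asAlgebraHom a := by
  induction a using MonoidAlgebra.induction_linear with
  | zero => simp
  | add a b ha hb => simp only [map_add, ha, hb]
  | single g c => simp only [Representation.asAlgebraHom_single, map_smul, φ.conj_apply_self]

end Irreducible

section Plancherel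

variable {k G : Type*} [Field k] [IsAlgClosed k] [Group G] [Fintype G] [NeZero (Nat.card G : k)]

variable (k G) in
theorem exists_irreducibles_card_mul_coeff_one_eq_sum_trace :
    ∃ (m : ℕ) (n : Fin m → ℕ) (ψ : ∀ i, Representation k G (Fin (n i) → k)),
      (∀ i, (ψ i).IsIrreducible) ∧ (∀ i j, Nonempty ((ψ i).Equiv (ψ j)) → i = j) ∧
      ∀ a : k[G], Fintype.card G * a.coeff 1 =
        ∑ i, n i * LinearMap.trace k _ ((ψ i).asAlgebraHom a) := by
  obtain ⟨m, n, hn, ⟨e⟩⟩ := IsSemisimpleRing.exists_algEquiv_pi_matrix_of_isAlgClosed k k[G]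
  let F i : k[G] →ₐ[k] Module.End k (Fin (n i) → k) :=
    (Matrix.toLinAlgEquiv' : _ ≃ₐ[k] _).toAlgHom.comp ((Pi.evalAlgHom k _ i).comp e.toAlgHom)
  have hF i (a : k[G]) : F i a = Matrix.toLin' (e a i) := rfl
  let ψ i : Representation k G (Fin (n i) → k) := (MonoidAlgebra.lift k _ G).symm (F i)
  have hψ i : (ψ i).asAlgebraHom = F i := (MonoidAlgebra.lift k _ G).apply_symm_apply (F i)
  refine ⟨m, n, ψ, fun i => ?_, fun i j ⟨φ⟩ => ?_, fun a => ?_⟩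
  · apply isIrreducible_of_asAlgebraHom_surjective
    rw [hψ]
    exact Matrix.toLinAlgEquiv'.surjective.comp
      ((Function.surjective_eval i).comp e.surjective)
  · by_contra hij
    have h := conj_asAlgebraHom φ (e.symm (Pi.single j 1))
    simp only [hψ, hF, e.apply_symm_apply, Pi.single_eq_of_ne hij, Pi.single_eq_same, map_zero,
      Matrix.toLin'_one] at h
    exact zero_ne_one h
  · rw [← trace_mulLeft_monoidAlgebra, ← trace_mulLeft_algEquiv e, trace_mulLeft_pi]
    refine sum_congr rfl fun i _ => ?_
    rw [trace_mulLeft_matrix, Fintype.card_fin, hψ, hF, Matrix.trace_toLin'_eq]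

end Plancherel

section Schur

variable {k G V W : Type*} [Field k] [Monoid G] [AddCommGroup V] [Module k V] [AddCommGroup W]
  [Module k W] {ρ : Representation k G V} {ψ : Representation k G W}

theorem asAlgebraHom_eq_smul_one_of_mem_center [IsAlgClosed k] [CharZero k]
    [FiniteDimensional k V] (hρ : ρ.IsIrreducible) {z : k[G]} (hz : z ∈ Submonoid.center k[G]) :
    ρ.asAlgebraHom z =
      (LinearMap.trace k V (ρ.asAlgebraHom z) / Module.finrank k V) • (1 : Module.End k V) := by
  have := (isIrreducible_iff.1 hρ).1
  obtain ⟨c, hc⟩ := (hρ.algebraMap_intertwiningMap_bijective_of_isAlgClosed).surjective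
    (Representation.IntertwiningMap.centralAlgebraMul ρ hz)
  have hscalar : ρ.asAlgebraHom z = c • 1 := by
    ext v
    exact DFunLike.congr_fun hc.symm v
  have hd : (Module.finrank k V : k) ≠ 0 := Nat.cast_ne_zero.2 Module.finrank_pos.ne'
  rw [hscalar, map_smul, LinearMap.trace_one, smul_eq_mul, mul_div_cancel_right₀ c hd]

theorem trace_asAlgebraHom_pow_of_mem_center [IsAlgClosed k] [CharZero k]
    [FiniteDimensional k V] (hρ : ρ.IsIrreducible) {z : k[G]} (hz : z ∈ Submonoid.center k[G])
    {c : k} (hc : LinearMap.trace k V (ρ.asAlgebraHom z) = Module.finrank k V * c) (T : ℕ) :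
    LinearMap.trace k V (ρ.asAlgebraHom (z ^ T)) = Module.finrank k V * c ^ T := by
  have := (isIrreducible_iff.1 hρ).1
  have hd : (Module.finrank k V : k) ≠ 0 := Nat.cast_ne_zero.2 Module.finrank_pos.ne'
  rw [map_pow, asAlgebraHom_eq_smul_one_of_mem_center hρ hz, hc, mul_div_cancel_left₀ c hd,
    smul_pow, one_pow, map_smul, LinearMap.trace_one, smul_eq_mul, mul_comm]

theorem finrank_mul_trace_asAlgebraHom_pow_of_equiv [IsAlgClosed k] [CharZero k]
    [FiniteDimensional k V] (hρ : ρ.IsIrreducible) (φ : ρ.Equiv ψ) {z : k[G]}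
    (hz : z ∈ Submonoid.center k[G]) {c : k}
    (hc : LinearMap.trace k W (ψ.asAlgebraHom z) = Module.finrank k W * c) (T : ℕ) :
    Module.finrank k V * LinearMap.trace k V (ρ.asAlgebraHom (z ^ T)) =
      (Module.finrank k W : k) ^ 2 * c ^ T := by
  have hrank : Module.finrank k V = Module.finrank k W := φ.toLinearEquiv.finrank_eq
  rw [← conj_asAlgebraHom φ, LinearMap.trace_conj', ← hrank] at hc
  rw [trace_asAlgebraHom_pow_of_mem_center hρ hz hc, hrank, ← mul_assoc, sq]

theorem asAlgebraHom_of_isTrivial (hρ : ρ.IsTrivial) (a : k[G]) :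
    ρ.asAlgebraHom a = MonoidAlgebra.lift k k G 1 a • (1 : Module.End k V) := by
  induction a using MonoidAlgebra.induction_linear with
  | zero => simp
  | add a b ha hb => simp only [map_add, ha, hb, add_smul]
  | single g c =>
    simp [Representation.asAlgebraHom_single, MonoidAlgebra.lift_single, hρ.out g,
      Module.End.one_eq_id]

theorem finrank_eq_one_of_isTrivial (hρ : ρ.IsIrreducible) (htriv : ρ.IsTrivial) :
    Module.finrank k V = 1 := by
  obtain ⟨_, h⟩ := isIrreducible_iff.1 hρ
  obtain ⟨v, hv⟩ := exists_ne (0 : V)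
  have hspan : Submodule.span k {v} = ⊤ :=
    (h _ fun g w hw => by rwa [htriv.out g]).resolve_left (by simpa using hv)
  exact finrank_eq_one v hv fun w =>
    Submodule.mem_span_singleton.1 (hspan ▸ Submodule.mem_top)

theorem nonempty_equiv_of_isTrivial (hρ : ρ.IsIrreducible) (hρ' : ρ.IsTrivial)
    (hψ : ψ.IsIrreducible) (hψ' : ψ.IsTrivial) : Nonempty (ρ.Equiv ψ) := by
  have hV := finrank_eq_one_of_isTrivial hρ hρ'
  have hW := finrank_eq_one_of_isTrivial hψ hψ'
  have := Module.finite_of_finrank_eq_succ hV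
  have := Module.finite_of_finrank_eq_succ hW
  exact ⟨.mk (LinearEquiv.ofFinrankEq V W (hV.trans hW.symm)) fun g => by
    rw [hρ'.out g, hψ'.out g, LinearMap.comp_id, LinearMap.id_comp]⟩

end Schur

/-- Every nontrivial irreducible complex representation of `G` is equivalent to a member of the
family `ρ`. Members of `ρ` may repeat or be reducible. Testing spaces in `Type` is enough, since
irreducible representations of finite groups can be realised on `Fin n → ℂ`. -/
def ContainsNontrivialIrreducibles {G ι : Type*} [Group G] {V : ι → Type*}
    [∀ i, AddCommGroup (V i)] [∀ i, Module ℂ (V i)] (ρ : ∀ i, Representation ℂ G (V i)) : Prop :=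
  ∀ (W : Type) [AddCommGroup W] [Module ℂ W] [FiniteDimensional ℂ W] (ψ : Representation ℂ G W),
    ψ.IsIrreducible → ¬ψ.IsTrivial → ∃ i, Nonempty (ψ.Equiv (ρ i))

theorem containsNontrivialIrreducibles_of_forall {G ι : Type*} [Group G] {V : ι → Type*}
    [∀ i, AddCommGroup (V i)] [∀ i, Module ℂ (V i)] {ρ : ∀ i, Representation ℂ G (V i)}
    (h : ∀ (W : Type) [AddCommGroup W] [Module ℂ W] [FiniteDimensional ℂ W],
      ∀ ψ : G →* (W →ₗ[ℂ] W),
      (∀ U : Submodule ℂ W, (∀ g : G, ∀ v ∈ U, ψ g v ∈ U) → U = ⊥ ∨ U = ⊤) →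
      (∃ g : G, ψ g ≠ LinearMap.id) →
      ∃ i, ∃ e : W ≃ₗ[ℂ] V i, ∀ g v, e (ψ g v) = ρ i g (e v)) :
    ContainsNontrivialIrreducibles ρ := by
  intro W _ _ _ ψ hψ htriv
  have hne : ∃ g, ψ g ≠ LinearMap.id := by
    by_contra! hid
    exact htriv ⟨hid⟩
  obtain ⟨i, e, he⟩ := h W ψ (isIrreducible_iff.1 hψ).2 hne
  exact ⟨i, ⟨.mk e fun g => LinearMap.ext (he g)⟩⟩

section UpperBound

variable {G ι : Type*} [Group G] [Fintype G] [Fintype ι] {V : ι → Type*}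
  [∀ i, AddCommGroup (V i)] [∀ i, Module ℂ (V i)]
  {ρ : ∀ i, Representation ℂ G (V i)}

theorem re_card_mul_coeff_one_pow_le (hρ : ContainsNontrivialIrreducibles ρ) {z : ℂ[G]}
    (hz : z ∈ Submonoid.center ℂ[G]) (haug : MonoidAlgebra.lift ℂ ℂ G 1 z = 1) {c : ι → ℝ}
    (hc₀ : ∀ i, 0 ≤ c i)
    (hc : ∀ i, LinearMap.trace ℂ (V i) ((ρ i).asAlgebraHom z) =
      Module.finrank ℂ (V i) * (c i : ℂ)) (T : ℕ) :
    (Fintype.card G * (z ^ T).coeff 1).re ≤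
      1 + ∑ i, (Module.finrank ℂ (V i) : ℝ) ^ 2 * c i ^ T := by
  obtain ⟨m, n, ψ, hirr, hinj, hcoeff⟩ :=
    exists_irreducibles_card_mul_coeff_one_eq_sum_trace ℂ G
  set f : Fin m → ℝ := fun j => (n j * LinearMap.trace ℂ _ ((ψ j).asAlgebraHom (z ^ T))).re
  have htriv (j : {j // (ψ j).IsTrivial}) : f j = 1 := by
    have hn : n j = 1 := by simpa using finrank_eq_one_of_isTrivial (hirr j) j.2
    simp [f, asAlgebraHom_of_isTrivial j.2, haug, hn]
  have hcard : Fintype.card {j // (ψ j).IsTrivial} ≤ 1 :=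
    Fintype.card_le_one_iff.2 fun j j' =>
      Subtype.ext (hinj _ _ (nonempty_equiv_of_isTrivial (hirr j) j.2 (hirr j') j'.2))
  choose i φ using fun j : {j // ¬(ψ j).IsTrivial} => hρ _ (ψ j) (hirr j) j.2
  have hi : Function.Injective i := fun j j' h =>
    Subtype.ext (hinj _ _ ⟨(φ j).some.trans (h ▸ (φ j').some.symm)⟩)
  have hnontriv (j : {j // ¬(ψ j).IsTrivial}) :
      f j = (Module.finrank ℂ (V (i j)) : ℝ) ^ 2 * c (i j) ^ T := by
    have h := finrank_mul_trace_asAlgebraHom_pow_of_equiv (hirr j) (φ j).some hz (hc (i j)) T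
    rw [Module.finrank_fin_fun] at h
    simp only [f, h]
    norm_cast
  calc (Fintype.card G * (z ^ T).coeff 1).re
      = ∑ j : {j // (ψ j).IsTrivial}, f j + ∑ j : {j // ¬(ψ j).IsTrivial}, f j := by
        rw [hcoeff, Complex.re_sum, Fintype.sum_subtype_add_sum_subtype]
    _ ≤ 1 + ∑ i, (Module.finrank ℂ (V i) : ℝ) ^ 2 * c i ^ T := by
        refine add_le_add ?_ ?_
        · simpa [htriv] using hcard
        · simp only [hnontriv]
          calc _ = ∑ l ∈ univ.map ⟨i, hi⟩, (Module.finrank ℂ (V l) : ℝ) ^ 2 * c l ^ T :=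
                (sum_map ..).symm
            _ ≤ _ := sum_le_univ_sum_of_nonneg fun l =>
                mul_nonneg (sq_nonneg _) (pow_nonneg (hc₀ l) T)

end UpperBound

theorem norm_trace_le_finrank_of_isOfFinOrder {V : Type*} [AddCommGroup V] [Module ℂ V]
    [FiniteDimensional ℂ V] {f : Module.End ℂ V} (hf : IsOfFinOrder f) :
    ‖LinearMap.trace ℂ V f‖ ≤ Module.finrank ℂ V := by
  obtain ⟨n, hn, hfn⟩ := isOfFinOrder_iff_pow_eq_one.1 hf
  have hnorm : ∀ μ ∈ f.charpoly.roots, ‖μ‖ = 1 := fun μ hμ => by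
    have hμ := f.hasEigenvalue_iff_isRoot_charpoly μ |>.2 (Polynomial.isRoot_of_mem_roots hμ)
    obtain ⟨v, hv⟩ := hμ.exists_hasEigenvector
    have hpow : (μ ^ n - 1) • v = 0 := by
      rw [sub_smul, ← hv.pow_apply, hfn, one_smul, Module.End.one_apply, sub_self]
    exact Complex.norm_eq_one_of_pow_eq_one
      (sub_eq_zero.1 ((smul_eq_zero.1 hpow).resolve_right hv.2)) hn.ne'
  have hsplits := IsAlgClosed.splits f.charpoly
  calc ‖LinearMap.trace ℂ V f‖ = ‖f.charpoly.roots.sum‖ := by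
        rw [Module.End.trace_eq_sum_roots_charpoly_of_splits hsplits]
    _ ≤ (f.charpoly.roots.map fun μ => ‖μ‖).sum := norm_multiset_sum_le _
    _ = f.charpoly.roots.card := by
        rw [Multiset.map_congr rfl hnorm, Multiset.map_const', Multiset.sum_replicate, nsmul_one]
    _ = Module.finrank ℂ V := by
        rw [Polynomial.splits_iff_card_roots.1 hsplits, f.charpoly_natDegree]

section LazyWalk

variable {G : Type*} [Group G]

/-- The law of `s ^ ξ` for a fair bit `ξ`, as an element of the group algebra. -/
def lazyStep (s : G) : ℂ[G] :=
  (2⁻¹ : ℂ) • (1 + MonoidAlgebra.single s 1)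

/-- The law of `s ^ ξ` for a fair bit `ξ` and an independent uniform `s ∈ C`, i.e. the step
distribution of the lazy random walk driven by `C`, as an element of the group algebra. -/
def lazyWalk (C : Set G) [Fintype C] : ℂ[G] :=
  𝔼 s : C, lazyStep (s : G)

variable {C : Set G} [Fintype C]

theorem lazyWalk_mem_center (hconj : ∀ g, ∀ s ∈ C, g * s * g⁻¹ ∈ C) :
    lazyWalk C ∈ Submonoid.center ℂ[G] := by
  have hmem (g s : G) : s ∈ C ↔ MulAut.conj g s ∈ C := by
    refine ⟨hconj g s, fun h => ?_⟩
    simpa [mul_assoc] using hconj g⁻¹ _ h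
  have hcomm (g : G) :
      MonoidAlgebra.single g 1 * lazyWalk C = lazyWalk C * MonoidAlgebra.single g 1 := by
    rw [lazyWalk, mul_expect, expect_mul]
    refine Fintype.expect_equiv ((MulAut.conj g).toEquiv.subtypeEquiv (hmem g)) _ _ fun s => ?_
    simp [lazyStep, mul_add, add_mul, MonoidAlgebra.single_mul_single]
  refine Submonoid.mem_center_iff.2 fun a => ?_
  induction a using MonoidAlgebra.induction_linear with
  | zero => simp
  | add a b ha hb => rw [add_mul, mul_add, ha, hb]
  | single g c =>
    rw [← mul_one c, ← MonoidAlgebra.smul_single', smul_mul_assoc, hcomm, mul_smul_comm]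

theorem map_lazyWalk (f : ℂ[G] →ₗ[ℂ] ℂ) : f (lazyWalk C) = 𝔼 s : C, f (lazyStep (s : G)) :=
  map_expect (f.restrictScalars ℚ≥0) _ _

theorem lift_one_lazyWalk [Nonempty C] : MonoidAlgebra.lift ℂ ℂ G 1 (lazyWalk C) = 1 := by
  have hstep (s : G) : MonoidAlgebra.lift ℂ ℂ G 1 (lazyStep s) = 1 := by
    simp only [lazyStep, map_smul, map_add, map_one, MonoidAlgebra.lift_single, MonoidHom.one_apply,
      smul_eq_mul]
    norm_num
  simpa [hstep] using map_lazyWalk (C := C) (MonoidAlgebra.lift ℂ ℂ G 1).toLinearMap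

variable {V : Type*} [AddCommGroup V] [Module ℂ V] {ρ : Representation ℂ G V} {χ : ℝ}

theorem expect_character_eq_of_forall_mem [Nonempty C] (hχ : ∀ s ∈ C, ρ.character s = χ) :
    𝔼 s : C, ρ.character s = χ := by
  simp only [hχ _ (Subtype.prop _), Fintype.expect_const]

variable [FiniteDimensional ℂ V]

theorem trace_asAlgebraHom_lazyWalk [Nonempty C] (hχ : 𝔼 s : C, ρ.character s = χ) :
    LinearMap.trace ℂ V (ρ.asAlgebraHom (lazyWalk C)) = (Module.finrank ℂ V + χ) / 2 := by
  have hstep (s : G) : LinearMap.trace ℂ V (ρ.asAlgebraHom (lazyStep s)) =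
      (Module.finrank ℂ V + ρ.character s) / 2 := by
    simp only [lazyStep, map_smul, map_add, map_one, Representation.asAlgebraHom_single, one_smul,
      LinearMap.trace_one, smul_eq_mul, Representation.character]
    ring
  calc _ = 𝔼 s : C, LinearMap.trace ℂ V (ρ.asAlgebraHom (lazyStep (s : G))) :=
        map_lazyWalk (LinearMap.trace ℂ V ∘ₗ ρ.asAlgebraHom.toLinearMap)
    _ = _ := by
        simp only [hstep, ← expect_div, expect_add_distrib, hχ, Fintype.expect_const]

theorem abs_expect_character_le_finrank [Finite G] [Nonempty C] (hχ : 𝔼 s : C, ρ.character s = χ) :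
    |χ| ≤ Module.finrank ℂ V := by
  have hnorm (s : G) : ‖ρ.character s‖ ≤ Module.finrank ℂ V :=
    norm_trace_le_finrank_of_isOfFinOrder (ρ.isOfFinOrder (isOfFinOrder_of_finite s))
  calc |χ| = ‖𝔼 s : C, ρ.character s‖ := by rw [hχ, Complex.norm_real, Real.norm_eq_abs]
    _ ≤ 𝔼 s : C, ‖ρ.character s‖ := RCLike.norm_expect_le (K := ℂ)
    _ ≤ Module.finrank ℂ V := expect_le univ_nonempty fun s _ => hnorm s

end LazyWalk

section RandomSubproduct
variable {G : Type*} {T : ℕ}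


/-- The subproduct `σ₁^{ξ₁} ⋯ σ_T^{ξ_T}` of a sequence `σ` selected by the bits `ξ`. -/
def subsetProd [Monoid G] (σ : Fin T → G) (ξ : Fin T → Bool) : G :=
  (List.ofFn fun t => if ξ t then σ t else 1).prod

/-- The probability that `subsetProd σ ξ = g` for uniformly random bits `ξ`. -/
def subsetProdLaw [Monoid G] (σ : Fin T → G) (g : G) : ℝ :=
  (#{ξ | subsetProd σ ξ = g} : ℝ) / 2 ^ T

theorem subsetProd_cons [Monoid G] (s : G) (σ : Fin T → G) (b : Bool) (ξ : Fin T → Bool) :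
    subsetProd (Fin.cons s σ : Fin (T + 1) → G) (Fin.cons b ξ : Fin (T + 1) → Bool) =
      (if b then s else 1) * subsetProd σ ξ := by
  simp [subsetProd, List.ofFn_succ]

theorem expect_fin_cons {α M : Type*} [Fintype α] [AddCommMonoid M] [Module ℚ≥0 M]
    (F : (Fin (T + 1) → α) → M) :
    𝔼 x, F x = 𝔼 a, 𝔼 y : Fin T → α, F (Fin.cons a y : Fin (T + 1) → α) := by
  rw [← expect_product', univ_product_univ]
  exact (Fintype.expect_equiv (Fin.consEquiv fun _ => α) _ _ fun _ => rfl).symm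

theorem expect_subsetProd [Monoid G] [Fintype G] (σ : Fin T → G) (F : G → ℝ) :
    𝔼 ξ, F (subsetProd σ ξ) = ∑ g, subsetProdLaw σ g * F g := by
  simp only [subsetProdLaw, Fintype.expect_eq_sum_div_card, Fintype.card_fun, Fintype.card_bool,
    Fintype.card_fin, div_mul_eq_mul_div, ← sum_div, Nat.cast_pow, Nat.cast_ofNat]
  congr 1
  rw [← sum_fiberwise univ (subsetProd σ)]
  refine sum_congr rfl fun g _ => ?_
  rw [← nsmul_eq_mul, ← sum_const]
  exact sum_congr rfl fun ξ hξ => by rw [(mem_filter.1 hξ).2]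

theorem sum_subsetProdLaw [Monoid G] [Fintype G] (σ : Fin T → G) : ∑ g, subsetProdLaw σ g = 1 := by
  simpa using (expect_subsetProd σ 1).symm

end RandomSubproduct

theorem coeff_expect {G ι : Type*} (s : Finset ι) (a : ι → ℂ[G]) (g : G) :
    (𝔼 i ∈ s, a i).coeff g = 𝔼 i ∈ s, (a i).coeff g :=
  map_expect (((Finsupp.lapply g).comp
    (MonoidAlgebra.coeffLinearEquiv ℂ).toLinearMap : ℂ[G] →ₗ[ℂ] ℂ).restrictScalars ℚ≥0) _ _

section Collision

variable {G : Type*} [Group G] {T : ℕ}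

/-- The law of the random subproduct of `σ`, as an element of the group algebra. -/
def subsetProdElement (σ : Fin T → G) : ℂ[G] :=
  𝔼 ξ, MonoidAlgebra.single (subsetProd σ ξ) 1

/-- The law of the inverse of the random subproduct of `σ`, as an element of the group algebra. -/
def subsetProdInvElement (σ : Fin T → G) : ℂ[G] :=
  𝔼 ξ, MonoidAlgebra.single (subsetProd σ ξ)⁻¹ 1

theorem lazyStep_eq_expect (s : G) :
    lazyStep s = 𝔼 b : Bool, MonoidAlgebra.single (if b then s else 1) (1 : ℂ) := by
  rw [expect_univ, Fintype.sum_bool, lazyStep, add_comm, MonoidAlgebra.one_def]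
  ext g
  simp [NNRat.smul_def]

theorem subsetProdElement_cons (s : G) (σ : Fin T → G) :
    subsetProdElement (Fin.cons s σ : Fin (T + 1) → G) = lazyStep s * subsetProdElement σ := by
  simp only [subsetProdElement, lazyStep_eq_expect, expect_fin_cons, subsetProd_cons,
    Fintype.expect_mul_expect, MonoidAlgebra.single_mul_single, mul_one]

theorem subsetProdInvElement_cons (s : G) (σ : Fin T → G) :
    subsetProdInvElement (Fin.cons s σ : Fin (T + 1) → G) =
      subsetProdInvElement σ * lazyStep s⁻¹ := by
  simp only [subsetProdInvElement, lazyStep_eq_expect, expect_fin_cons, subsetProd_cons,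
    Fintype.expect_mul_expect, MonoidAlgebra.single_mul_single, mul_one, mul_inv_rev]
  rw [expect_comm]
  refine expect_congr rfl fun ξ _ => expect_congr rfl fun b _ => ?_
  cases b <;> simp

variable {C : Set G} [Fintype C]

theorem expect_lazyStep_inv_mul_lazyStep (hinv : ∀ s ∈ C, s⁻¹ ∈ C) :
    𝔼 s : C, lazyStep (s : G)⁻¹ * lazyStep (s : G) = lazyWalk C := by
  have hmem (s : G) : s ∈ C ↔ Equiv.inv G s ∈ C :=
    ⟨hinv s, fun h => by simpa using hinv _ h⟩
  have hmul (s : G) : lazyStep s⁻¹ * lazyStep s = (2⁻¹ : ℂ) • (lazyStep s⁻¹ + lazyStep s) := by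
    simp only [lazyStep, smul_mul_smul_comm, mul_add, add_mul, one_mul, mul_one,
      MonoidAlgebra.single_mul_single, inv_mul_cancel, ← MonoidAlgebra.one_def]
    module
  have hreindex : 𝔼 s : C, lazyStep (s : G)⁻¹ = lazyWalk C :=
    Fintype.expect_equiv ((Equiv.inv G).subtypeEquiv hmem) _ _ fun _ => rfl
  simp only [hmul, ← smul_expect, expect_add_distrib, hreindex]
  rw [lazyWalk, ← two_smul ℂ, inv_smul_smul₀ two_ne_zero]

theorem expect_subsetProdInvElement_mul_subsetProdElement
    (hconj : ∀ g, ∀ s ∈ C, g * s * g⁻¹ ∈ C) (hinv : ∀ s ∈ C, s⁻¹ ∈ C) (T : ℕ) :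
    𝔼 σ : Fin T → C, subsetProdInvElement (fun t => (σ t : G)) *
      subsetProdElement (fun t => (σ t : G)) = lazyWalk C ^ T := by
  induction T with
  | zero => simp [subsetProdInvElement, subsetProdElement, subsetProd, MonoidAlgebra.one_def]
  | succ T ih =>
    have hcons (s : C) (σ : Fin T → C) : (fun t => ((Fin.cons s σ : Fin (T + 1) → C) t : G)) =
        (Fin.cons (s : G) fun t => (σ t : G) : Fin (T + 1) → G) := by
      funext t
      cases t using Fin.cases <;> rfl
    have hcomm (a : ℂ[G]) : a * lazyWalk C = lazyWalk C * a :=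
      Submonoid.mem_center_iff.1 (lazyWalk_mem_center hconj) a
    calc _ = 𝔼 σ : Fin T → C, subsetProdInvElement (fun t => (σ t : G)) *
          (𝔼 s : C, lazyStep (s : G)⁻¹ * lazyStep (s : G)) *
            subsetProdElement (fun t => (σ t : G)) := by
          rw [expect_fin_cons, expect_comm]
          simp only [hcons, subsetProdInvElement_cons, subsetProdElement_cons, mul_expect,
            expect_mul, mul_assoc]
      _ = lazyWalk C ^ (T + 1) := by
          rw [expect_lazyStep_inv_mul_lazyStep hinv, pow_succ', ← ih, mul_expect]
          simp only [hcomm, mul_assoc]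

theorem coeff_one_subsetProdInvElement_mul_subsetProdElement [Fintype G] (σ : Fin T → G) :
    (subsetProdInvElement σ * subsetProdElement σ).coeff 1 =
      ((∑ g, subsetProdLaw σ g ^ 2 : ℝ) : ℂ) := by
  have hcollision : ∑ g, subsetProdLaw σ g ^ 2 =
      𝔼 ξ, 𝔼 ξ', if subsetProd σ ξ = subsetProd σ ξ' then 1 else 0 := by
    rw [expect_subsetProd σ fun g => 𝔼 ξ', if g = subsetProd σ ξ' then 1 else 0]
    refine sum_congr rfl fun g _ => ?_
    rw [expect_subsetProd σ fun h => if g = h then 1 else 0]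
    simp [sq]
  simp only [subsetProdInvElement, subsetProdElement, Fintype.expect_mul_expect, coeff_expect,
    MonoidAlgebra.single_mul_single, mul_one, MonoidAlgebra.coeff_single, Finsupp.single_apply,
    inv_mul_eq_one, hcollision]
  simp only [Complex.ofReal_expect, apply_ite ((↑) : ℝ → ℂ), Complex.ofReal_one,
    Complex.ofReal_zero]

theorem expect_sum_sq_subsetProdLaw [Fintype G] (hconj : ∀ g, ∀ s ∈ C, g * s * g⁻¹ ∈ C)
    (hinv : ∀ s ∈ C, s⁻¹ ∈ C) (T : ℕ) :
    ((𝔼 σ : Fin T → C, ∑ g, subsetProdLaw (fun t => (σ t : G)) g ^ 2 : ℝ) : ℂ) =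
      (lazyWalk C ^ T).coeff 1 := by
  rw [← expect_subsetProdInvElement_mul_subsetProdElement hconj hinv, coeff_expect]
  simp only [coeff_one_subsetProdInvElement_mul_subsetProdElement, Complex.ofReal_expect]

end Collision

section TotalVariation

theorem sq_sum_abs_sub_inv_card_le {α : Type*} [Fintype α] {f : α → ℝ}
    (hf : ∑ x, f x = 1) :
    (∑ x, |f x - (Fintype.card α : ℝ)⁻¹|) ^ 2 ≤ Fintype.card α * ∑ x, f x ^ 2 - 1 := by
  have := (nonempty_of_sum_ne_zero (hf.trans_ne one_ne_zero)).to_type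
  have hcard : (Fintype.card α : ℝ) ≠ 0 := Nat.cast_ne_zero.2 Fintype.card_ne_zero
  calc _ ≤ Fintype.card α * ∑ x, |f x - (Fintype.card α : ℝ)⁻¹| ^ 2 := sq_sum_le_card_mul_sum_sq
    _ = Fintype.card α * ∑ x, f x ^ 2 - 1 := by
      simp only [sq_abs, sub_sq, sum_add_distrib, sum_sub_distrib, ← sum_mul, ← mul_sum, hf,
        sum_const, card_univ, nsmul_eq_mul]
      field_simp
      ring

theorem sq_expect_le_expect_sq {α : Type*} [Fintype α] (f : α → ℝ) :
    (𝔼 x, f x) ^ 2 ≤ 𝔼 x, f x ^ 2 := by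
  simpa only [Fintype.expect_eq_sum_div_card, card_univ] using
    sum_div_card_sq_le_sum_sq_div_card (s := univ) (f := f)

end TotalVariation

section General

variable {G ι : Type*} [Group G] [Fintype G] [Fintype ι] {V : ι → Type*}
  [∀ i, AddCommGroup (V i)] [∀ i, Module ℂ (V i)] [∀ i, FiniteDimensional ℂ (V i)]
  {ρ : ∀ i, Representation ℂ G (V i)} {C : Set G} [Fintype C] [Nonempty C] {χ : ι → ℝ}

theorem re_card_mul_coeff_one_lazyWalk_pow_le (hρ : ContainsNontrivialIrreducibles ρ)
    (hconj : ∀ g, ∀ s ∈ C, g * s * g⁻¹ ∈ C) (hχ : ∀ i, 𝔼 s : C, (ρ i).character s = χ i) (T : ℕ) :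
    (Fintype.card G * (lazyWalk C ^ T).coeff 1).re ≤
      1 + ∑ i, (Module.finrank ℂ (V i) : ℝ) ^ 2 * ((1 + χ i / Module.finrank ℂ (V i)) / 2) ^ T := by
  have habs i : |χ i| ≤ Module.finrank ℂ (V i) := abs_expect_character_le_finrank (hχ i)
  refine re_card_mul_coeff_one_pow_le hρ (lazyWalk_mem_center hconj) lift_one_lazyWalk
    (fun i => ?_) (fun i => ?_) T
  · have hratio : |χ i / Module.finrank ℂ (V i)| ≤ 1 := by
      rw [abs_div, Nat.abs_cast]
      exact div_le_one_of_le₀ (habs i) (Nat.cast_nonneg _)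
    linarith [neg_le_of_abs_le hratio]
  · have hmul : (Module.finrank ℂ (V i) : ℝ) * (χ i / Module.finrank ℂ (V i)) = χ i :=
      mul_div_cancel_of_imp' fun h => by simpa [h] using habs i
    rw [trace_asAlgebraHom_lazyWalk (hχ i)]
    norm_cast
    rw [← mul_div_assoc, mul_add, mul_one, hmul]

theorem avgTV_le_rep_sum_general (hρ : ContainsNontrivialIrreducibles ρ)
    (hconj : ∀ g, ∀ s ∈ C, g * s * g⁻¹ ∈ C) (hinv : ∀ s ∈ C, s⁻¹ ∈ C)
    (hχ : ∀ i, 𝔼 s : C, (ρ i).character s = χ i) (T : ℕ) :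
    𝔼 σ : Fin T → C, ∑ g, |subsetProdLaw (fun t => (σ t : G)) g - (Fintype.card G : ℝ)⁻¹| ≤
      √(∑ i, (Module.finrank ℂ (V i) : ℝ) ^ 2 *
        ((1 + χ i / Module.finrank ℂ (V i)) / 2) ^ T) := by
  refine Real.le_sqrt_of_sq_le ?_
  calc _ ≤ 𝔼 σ : Fin T → C,
        (∑ g, |subsetProdLaw (fun t => (σ t : G)) g - (Fintype.card G : ℝ)⁻¹|) ^ 2 :=
        sq_expect_le_expect_sq _
    _ ≤ 𝔼 σ : Fin T → C,
        (Fintype.card G * ∑ g, subsetProdLaw (fun t => (σ t : G)) g ^ 2 - 1) :=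
        expect_le_expect fun σ _ => sq_sum_abs_sub_inv_card_le (sum_subsetProdLaw _)
    _ = (Fintype.card G * (lazyWalk C ^ T).coeff 1).re - 1 := by
        rw [← expect_sum_sq_subsetProdLaw hconj hinv, expect_sub_distrib, ← mul_expect,
          Fintype.expect_const]
        norm_cast
    _ ≤ _ := sub_le_iff_le_add'.2 (re_card_mul_coeff_one_lazyWalk_pow_le hρ hconj hχ T)

end General

section Transpositions

theorem isSwap_conj {α : Type*} [DecidableEq α] {s : Equiv.Perm α} (hs : s.IsSwap)
    (g : Equiv.Perm α) : (g * s * g⁻¹).IsSwap := by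
  obtain ⟨x, y, hxy, rfl⟩ := hs
  exact ⟨g x, g y, g.injective.ne hxy, (Equiv.swap_apply_apply g x y).symm⟩

theorem isSwap_inv {α : Type*} [DecidableEq α] {s : Equiv.Perm α} (hs : s.IsSwap) :
    s⁻¹.IsSwap := by
  obtain ⟨x, y, hxy, rfl⟩ := hs
  exact ⟨x, y, hxy, Equiv.swap_inv x y⟩

theorem nonempty_isSwap {α : Type*} [DecidableEq α] [Nontrivial α] :
    Nonempty {s : Equiv.Perm α | s.IsSwap} :=
  let ⟨x, y, hxy⟩ := exists_pair_ne α
  ⟨⟨Equiv.swap x y, x, y, hxy, rfl⟩⟩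

theorem tvToUniform_eq_sum {d T : ℕ} (σ : Fin T → Equiv.Perm (Fin d)) :
    tvToUniform σ = ∑ g, |subsetProdLaw σ g - (Fintype.card (Equiv.Perm (Fin d)) : ℝ)⁻¹| := by
  have hlaw (g : Equiv.Perm (Fin d)) : permProdPMF σ g = subsetProdLaw σ g := by
    unfold permProdPMF subsetProdLaw
    congr!
  simp only [tvToUniform, hlaw, Fintype.card_perm, Fintype.card_fin]

theorem avgTV_eq_expect (d T : ℕ) :
    avgTV d T = 𝔼 σ : Fin T → {s : Equiv.Perm (Fin d) | s.IsSwap},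
      ∑ g, |subsetProdLaw (fun t => (σ t : Equiv.Perm (Fin d))) g -
        (Fintype.card (Equiv.Perm (Fin d)) : ℝ)⁻¹| := by
  simp only [← tvToUniform_eq_sum, Fintype.expect_eq_sum_div_card, Fintype.card_fun,
    Fintype.card_fin, Nat.cast_pow]
  rfl

end Transpositions

/-- **The Diaconis–Shahshahani upper bound lemma** applied to products of random
transpositions with Bernoulli exponents: the expected total variation distance to
uniformity is controlled by a sum over the nontrivial irreducible complex representations
of `S_d`. -/
theorem avgTV_le_rep_sum
    (d T : ℕ) (hd : 2 ≤ d) (hT : 1 ≤ T)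
    (ι : Type) [Fintype ι] (V : ι → Type)
    [∀ i, AddCommGroup (V i)] [∀ i, Module ℂ (V i)] [∀ i, FiniteDimensional ℂ (V i)]
    (ρ : ∀ i, Equiv.Perm (Fin d) →* (V i →ₗ[ℂ] V i))
    (hirred : ∀ i, ∀ W : Submodule ℂ (V i),
      (∀ g : Equiv.Perm (Fin d), ∀ v ∈ W, ρ i g v ∈ W) → W = ⊥ ∨ W = ⊤)
    (hnontrivial : ∀ i, ∃ g : Equiv.Perm (Fin d), ρ i g ≠ LinearMap.id)
    (hpairwise : ∀ i j, i ≠ j →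
      ¬∃ e : V i ≃ₗ[ℂ] V j, ∀ g v, e (ρ i g v) = ρ j g (e v))
    (hcomplete : ∀ (W : Type) [AddCommGroup W] [Module ℂ W] [FiniteDimensional ℂ W],
      ∀ ψ : Equiv.Perm (Fin d) →* (W →ₗ[ℂ] W),
      (∀ U : Submodule ℂ W, (∀ g : Equiv.Perm (Fin d), ∀ v ∈ U, ψ g v ∈ U) →
        U = ⊥ ∨ U = ⊤) →
      (∃ g : Equiv.Perm (Fin d), ψ g ≠ LinearMap.id) →
      ∃ i, ∃ e : W ≃ₗ[ℂ] V i, ∀ g v, e (ψ g v) = ρ i g (e v))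
    (χ : ι → ℝ)
    (hχ : ∀ i, ∀ τ : Equiv.Perm (Fin d), τ.IsSwap →
      LinearMap.trace ℂ (V i) (ρ i τ) = (χ i : ℂ)) :
    avgTV d T ≤
      Real.sqrt (∑ i, (Module.finrank ℂ (V i) : ℝ) ^ 2 *
        ((1 + χ i / (Module.finrank ℂ (V i) : ℝ)) / 2) ^ T) := by
  have : Nontrivial (Fin d) := Fin.nontrivial_iff_two_le.2 hd
  have : Nonempty {s : Equiv.Perm (Fin d) | s.IsSwap} := nonempty_isSwap
  rw [avgTV_eq_expect]
  exact avgTV_le_rep_sum_general (C := {s : Equiv.Perm (Fin d) | s.IsSwap})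
    (containsNontrivialIrreducibles_of_forall hcomplete) (fun g _ hs => isSwap_conj hs g)
    (fun _ hs => isSwap_inv hs) (fun i => expect_character_eq_of_forall_mem (hχ i)) T

end KacJL
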